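/- Let θ be a Borel probability (or sub-probability) measure on O(n) satisfying the Frostman condition θ(B(g, r)) ≤ r^α for all g ∈ O(n) and r > 0, with α > (n-1)(n-2)/2, where B(g,r) is the ball in operator norm. Then for all nonzero x, z ∈ ℝⁿ and all r > 0, θ({g ∈ O(n) : |x - g(z)| < r}) ≤ C(n, α) · (r/|z|)^{α - (n-1)(n-2)/2}. -/

import Mathlib

open MeasureTheory Metric Set
open scoped ENNReal

/-!
Let `|w| = 1`, and let `g`, `h` be isometries in the same fibre of `g ↦ g w`, up to an error `ρ`.
Since `star g * g = 1 = star h * h`, the difference `u = g - h` satisfies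
`u + star u = -(star (g - 1) * u + star u * (h - 1))`, which is small compared with `u` when `g` and
`h` are near `1`. Hence `u` is, up to a small fraction of itself, determined by the skew-adjoint
part of its compression to `wᗮ` and by `u w = O(ρ)`. After translating by an isometry `k`, the
fibre near `k` is thus covered by as many balls of radius `O(ρ)` as a bounded set in the space of
skew-adjoint operators on `wᗮ`, which has dimension `(n - 1) (n - 2) / 2`. The Frostman condition
bounds the mass of each of these balls.
-/

section Covering

open scoped NNReal
open Module (finrank)

theorem coe_lt_edist_iff {X : Type*} [PseudoMetricSpace X] {x y : X} {ε : ℝ≥0} :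
    (ε : ℝ≥0∞) < edist x y ↔ (ε : ℝ) < dist x y := by
  rw [edist_nndist, ENNReal.coe_lt_coe, ← NNReal.coe_lt_coe, coe_nndist]

theorem packingNumber_le_packingNumber_of_mapsTo {X Y : Type*} [PseudoMetricSpace X]
    [PseudoMetricSpace Y] {A : Set X} {B : Set Y} {f : X → Y} {K δ : ℝ≥0} (hAB : MapsTo f A B)
    (hf : ∀ x ∈ A, ∀ y ∈ A, dist x y ≤ K * dist (f x) (f y) + δ) (ε : ℝ≥0) :
    packingNumber (K * ε + δ) A ≤ packingNumber ε B := by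
  refine iSup_le fun S ↦ iSup_le fun hSA ↦ iSup_le fun hS ↦ ?_
  have hsep : ∀ x ∈ S, ∀ y ∈ S, x ≠ y → ε < edist (f x) (f y) := by
    intro x hx y hy hxy
    have hdist : (K * ε + δ : ℝ) < dist x y := mod_cast coe_lt_edist_iff.1 (hS hx hy hxy)
    have hKε : (K * ε : ℝ) < K * dist (f x) (f y) := by
      linarith [hf x (hSA hx) y (hSA hy)]
    exact coe_lt_edist_iff.2 (lt_of_mul_lt_mul_left hKε K.2)
  have hinj : InjOn f S := fun x hx y hy hxy ↦ by
    by_contra hne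
    simpa [hxy] using hsep x hx y hy hne
  rw [← hinj.encard_image]
  refine IsSeparated.encard_le_packingNumber ((image_mono hSA).trans hAB.image_subset) ?_
  rintro _ ⟨x, hx, rfl⟩ _ ⟨y, hy, rfl⟩ hxy
  exact hsep x hx y hy (ne_of_apply_ne f hxy)

theorem packingNumber_closedBall_le {V : Type*} [NormedAddCommGroup V] [NormedSpace ℝ V]
    [FiniteDimensional ℝ V] (x : V) (R : ℝ≥0) {ε : ℝ≥0} (hε : 0 < ε) :
    (packingNumber ε (closedBall x R) : ℝ≥0∞) ≤
      ENNReal.ofReal ((1 + 2 * R / ε) ^ finrank ℝ V) := by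
  borelize V
  let μ : Measure V := Measure.addHaar
  have : (0 : ℝ) < ε := hε
  simp only [packingNumber, ENat.toENNReal_iSup, iSup_le_iff]
  intro S hS hsep
  have hdisj : Pairwise (Function.onFun Disjoint fun y : S ↦ ball (y : V) (ε / 2)) := by
    intro y z hyz
    refine ball_disjoint_ball ?_
    linarith [coe_lt_edist_iff.1 (hsep y.2 z.2 (Subtype.coe_ne_coe.2 hyz))]
  have hsub : ⋃ y : S, ball (y : V) (ε / 2) ⊆ ball x (R + ε / 2) :=
    iUnion_subset fun y ↦ ball_subset_ball' (by linarith [mem_closedBall.1 (hS y.2)])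
  have hvol : S.encard * μ (ball x (ε / 2)) ≤
      ENNReal.ofReal ((1 + 2 * R / ε) ^ finrank ℝ V) * μ (ball x (ε / 2)) :=
    calc S.encard * μ (ball x (ε / 2)) = ∑' y : S, μ (ball (y : V) (ε / 2)) := by
          simp_rw [μ.addHaar_ball_center _ (ε / 2 : ℝ), ENNReal.tsum_set_const]
      _ ≤ μ (⋃ y : S, ball (y : V) (ε / 2)) :=
          tsum_meas_le_meas_iUnion_of_disjoint μ (fun _ ↦ measurableSet_ball) hdisj
      _ ≤ μ (ball x (R + ε / 2)) := measure_mono hsub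
      _ = μ (ball x ((1 + 2 * R / ε) * (ε / 2))) := by congr 2; field_simp; ring
      _ = _ := by
        rw [μ.addHaar_ball_mul_of_pos _ (by positivity), μ.addHaar_ball_center x]
  exact (ENNReal.mul_le_mul_iff_left (measure_ball_pos μ x (by positivity)).ne'
    measure_ball_lt_top.ne).1 hvol

theorem measure_le_of_packingNumber_le {X : Type*} [PseudoMetricSpace X] [MeasurableSpace X]
    {μ : Measure X} {A : Set X} {ε : ℝ≥0} {N : ℝ} {c : ℝ≥0∞}
    (hN : (packingNumber ε A : ℝ≥0∞) ≤ ENNReal.ofReal N)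
    (hc : ∀ x ∈ A, μ (A ∩ closedBall x ε) ≤ c) : μ A ≤ ENNReal.ofReal N * c := by
  have hfin : packingNumber ε A ≠ ⊤ :=
    ENat.toENNReal_ne_top.1 (ne_top_of_le_ne_top ENNReal.ofReal_ne_top hN)
  obtain ⟨S, hSA, hSfin, hcover, hcard⟩ := exists_set_encard_eq_coveringNumber
    (ne_top_of_le_ne_top hfin (coveringNumber_le_packingNumber ε A))
  calc μ A ≤ μ (⋃ x ∈ S, A ∩ closedBall x ε) := measure_mono <| by
        rw [← inter_iUnion₂]
        exact subset_inter subset_rfl (isCover_iff_subset_iUnion_closedBall.1 hcover)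
    _ ≤ ∑' x : S, μ (A ∩ closedBall x ε) := measure_biUnion_le μ hSfin.countable _
    _ ≤ ∑' _ : S, c := ENNReal.tsum_le_tsum fun x ↦ hc x (hSA x.2)
    _ = coveringNumber ε A * c := by rw [ENNReal.tsum_set_const, hcard]
    _ ≤ ENNReal.ofReal N * c := by
        gcongr
        exact (ENat.toENNReal_le.2 (coveringNumber_le_packingNumber ε A)).trans hN

end Covering

theorem norm_mul_mul_le {R : Type*} [NonUnitalSeminormedRing R] {p q : R} (hp : ‖p‖ ≤ 1)
    (hq : ‖q‖ ≤ 1) (a : R) : ‖p * a * q‖ ≤ ‖a‖ :=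
  calc ‖p * a * q‖ ≤ ‖p‖ * ‖a‖ * ‖q‖ := norm_mul₃_le
    _ ≤ 1 * ‖a‖ * 1 := by gcongr
    _ = ‖a‖ := by rw [one_mul, mul_one]

section StarModule

variable {A : Type*} [NormedAddCommGroup A] [NormedSpace ℝ A] [StarAddMonoid A] [StarModule ℝ A]

theorem norm_le_norm_skewAdjointPart_add (a : A) :
    ‖a‖ ≤ ‖(skewAdjointPart ℝ a : A)‖ + ‖a + star a‖ / 2 := by
  have hself : ‖(selfAdjointPart ℝ a : A)‖ = ‖a + star a‖ / 2 := by
    rw [selfAdjointPart_apply_coe, norm_smul, invOf_eq_inv, norm_inv, Real.norm_two,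
      inv_mul_eq_div]
  calc ‖a‖ = ‖(skewAdjointPart ℝ a : A) + selfAdjointPart ℝ a‖ := by
        rw [add_comm, StarModule.selfAdjointPart_add_skewAdjointPart]
    _ ≤ ‖(skewAdjointPart ℝ a : A)‖ + ‖a + star a‖ / 2 := norm_add_le_of_le le_rfl hself.le

variable [NormedStarGroup A]

theorem norm_skewAdjointPart_le (a : A) : ‖(skewAdjointPart ℝ a : A)‖ ≤ ‖a‖ :=
  calc ‖(skewAdjointPart ℝ a : A)‖ = ‖a - star a‖ / 2 := by
        rw [skewAdjointPart_apply_coe, norm_smul, invOf_eq_inv, norm_inv, Real.norm_two,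
          inv_mul_eq_div]
    _ ≤ (‖a‖ + ‖star a‖) / 2 := by gcongr; exact norm_sub_le _ _
    _ = ‖a‖ := by rw [norm_star, add_self_div_two]

end StarModule

theorem norm_sub_add_star_sub_le {R : Type*} [NormedRing R] [StarRing R] [NormedStarGroup R]
    {a b : R} (hab : star a * a = star b * b) :
    ‖(a - b) + star (a - b)‖ ≤ (‖a - 1‖ + ‖b - 1‖) * ‖a - b‖ := by
  have hfactor : (a - b) + star (a - b) = -(star (a - 1) * (a - b) + star (a - b) * (b - 1)) := by
    simp only [star_sub, star_one]
    linear_combination (norm := noncomm_ring) hab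
  calc ‖(a - b) + star (a - b)‖
      ≤ ‖star (a - 1)‖ * ‖a - b‖ + ‖star (a - b)‖ * ‖b - 1‖ := by
        rw [hfactor, norm_neg]
        exact norm_add_le_of_le (norm_mul_le _ _) (norm_mul_le _ _)
    _ = (‖a - 1‖ + ‖b - 1‖) * ‖a - b‖ := by simp only [norm_star]; ring

section SkewAdjoint

open Module (finrank)
open scoped RealInnerProductSpace

variable {E : Type*} [NormedAddCommGroup E] [InnerProductSpace ℝ E]

theorem norm_mul_starProjection_span_singleton_le {w : E} (hw : ‖w‖ = 1) (u : E →L[ℝ] E) :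
    ‖u * (ℝ ∙ w).starProjection‖ ≤ ‖u w‖ := by
  refine ContinuousLinearMap.opNorm_le_bound _ (norm_nonneg _) fun v ↦ ?_
  have hinner : |⟪w, v⟫| ≤ ‖v‖ := by simpa [hw] using abs_real_inner_le_norm w v
  calc ‖u ((ℝ ∙ w).starProjection v)‖ = |⟪w, v⟫| * ‖u w‖ := by
        rw [Submodule.starProjection_unit_singleton ℝ hw, map_smul, norm_smul, Real.norm_eq_abs]
    _ ≤ ‖v‖ * ‖u w‖ := by gcongr
    _ = ‖u w‖ * ‖v‖ := mul_comm _ _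

variable [CompleteSpace E]

theorem inner_apply_eq_neg_inner_apply_of_mem_skewAdjoint {A : E →L[ℝ] E}
    (hA : A ∈ skewAdjoint (E →L[ℝ] E)) (x y : E) : ⟪A x, y⟫ = -⟪x, A y⟫ := by
  rw [← A.adjoint_inner_left, ← ContinuousLinearMap.star_eq_adjoint, skewAdjoint.mem_iff.1 hA,
    neg_apply, inner_neg_left, neg_neg]

/-- The skew-adjoint operators vanishing on the subspace `L`: the Lie algebra of the group of
linear isometries fixing `L` pointwise. -/
def skewAdjointVanishingOn (L : Submodule ℝ E) : Submodule ℝ (E →L[ℝ] E) where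
  carrier := {A | A ∈ skewAdjoint (E →L[ℝ] E) ∧ ∀ x ∈ L, A x = 0}
  add_mem' := fun hA hB ↦ ⟨add_mem hA.1 hB.1, fun x hx ↦ by simp [hA.2 x hx, hB.2 x hx]⟩
  zero_mem' := ⟨zero_mem _, fun _ _ ↦ rfl⟩
  smul_mem' := fun c _ hA ↦ ⟨skewAdjoint.smul_mem c hA.1, fun x hx ↦ by simp [hA.2 x hx]⟩

namespace skewAdjointVanishingOn

variable (L : Submodule ℝ E)

/-- The alternating form `(x, y) ↦ ⟪A x, y⟫` on `Lᗮ` attached to `A`. It determines `A`, hence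
bounds the dimension of `skewAdjointVanishingOn L`. -/
def alternatingForm : skewAdjointVanishingOn L →ₗ[ℝ] Lᗮ [⋀^Fin 2]→ₗ[ℝ] ℝ where
  toFun A :=
    { toFun := fun v ↦ ⟪(A : E →L[ℝ] E) (v 0), (v 1 : E)⟫
      map_update_add' := by
        intro _ v i x y
        fin_cases i <;> simp [inner_add_left, inner_add_right]
      map_update_smul' := by
        intro _ v i c x
        fin_cases i <;> simp [inner_smul_left, inner_smul_right]
      map_eq_zero_of_eq' := by
        intro v i j hv hij
        have hskew := inner_apply_eq_neg_inner_apply_of_mem_skewAdjoint A.2.1 (v 0) (v 0)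
        have h01 : v 1 = v 0 := by fin_cases i <;> fin_cases j <;> simp_all
        rw [real_inner_comm, self_eq_neg] at hskew
        rw [h01, real_inner_comm, hskew] }
  map_add' A B := by ext v; simp [inner_add_left]
  map_smul' c A := by ext v; simp [inner_smul_left]

variable [L.HasOrthogonalProjection]

theorem apply_starProjection_orthogonal {A : E →L[ℝ] E} (hA : A ∈ skewAdjointVanishingOn L)
    (x : E) : A (Lᗮ.starProjection x) = A x := by
  rw [L.starProjection_orthogonal', sub_apply, map_sub,
    hA.2 _ (L.starProjection_apply_mem x), sub_zero, one_apply_eq_self]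

theorem inner_apply_starProjection_orthogonal {A : E →L[ℝ] E} (hA : A ∈ skewAdjointVanishingOn L)
    (x y : E) : ⟪A (Lᗮ.starProjection x), Lᗮ.starProjection y⟫ = ⟪A x, y⟫ := by
  rw [apply_starProjection_orthogonal L hA,
    inner_apply_eq_neg_inner_apply_of_mem_skewAdjoint hA.1,
    apply_starProjection_orthogonal L hA,
    ← inner_apply_eq_neg_inner_apply_of_mem_skewAdjoint hA.1]

theorem alternatingForm_injective : Function.Injective (alternatingForm L) := by
  refine (injective_iff_map_eq_zero _).2 fun A hA ↦ ?_
  ext x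
  refine ext_inner_right ℝ fun y ↦ ?_
  rw [← inner_apply_starProjection_orthogonal L A.2]
  simpa [alternatingForm] using congrArg (fun φ : Lᗮ [⋀^Fin 2]→ₗ[ℝ] ℝ ↦
    φ ![Lᗮ.orthogonalProjectionOnto x, Lᗮ.orthogonalProjectionOnto y]) hA

theorem finrank_le [FiniteDimensional ℝ Lᗮ] :
    finrank ℝ (skewAdjointVanishingOn L) ≤ (finrank ℝ Lᗮ).choose 2 := by
  let Φ := exteriorPower.alternatingMapLinearEquiv (R := ℝ) (M := Lᗮ) (N := ℝ) (n := 2)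
  calc finrank ℝ (skewAdjointVanishingOn L)
      ≤ finrank ℝ (Module.Dual ℝ (⋀[ℝ]^2 Lᗮ)) :=
        LinearMap.finrank_le_finrank_of_injective (f := Φ.toLinearMap ∘ₗ alternatingForm L)
          (Φ.injective.comp (alternatingForm_injective L))
    _ = (finrank ℝ Lᗮ).choose 2 := by rw [Subspace.dual_finrank_eq, exteriorPower.finrank_eq]

theorem skewAdjointPart_conj_mem (u : E →L[ℝ] E) :
    (skewAdjointPart ℝ (Lᗮ.starProjection * u * Lᗮ.starProjection) : E →L[ℝ] E) ∈
      skewAdjointVanishingOn L := by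
  refine ⟨(skewAdjointPart ℝ _).2, fun x hx ↦ ?_⟩
  have hPx : Lᗮ.starProjection x = 0 :=
    (Lᗮ.starProjection_apply_eq_zero_iff).2 (L.le_orthogonal_orthogonal hx)
  have hPstar : star Lᗮ.starProjection = Lᗮ.starProjection := isSelfAdjoint_starProjection Lᗮ
  simp only [skewAdjointPart_apply_coe, star_mul, hPstar, smul_apply, sub_apply,
    mul_apply_eq_comp, hPx, map_zero, sub_zero, smul_zero]

/-- The skew-adjoint part of the compression of an operator to `Lᗮ`. It serves as a chart on the
fibres of the restriction map of isometries to `L`. -/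
noncomputable def chart : (E →L[ℝ] E) →ₗ[ℝ] skewAdjointVanishingOn L :=
  LinearMap.codRestrict _
    ((skewAdjoint.submodule ℝ _).subtype ∘ₗ skewAdjointPart ℝ ∘ₗ
      LinearMap.mulLeftRight ℝ (Lᗮ.starProjection, Lᗮ.starProjection))
    (skewAdjointPart_conj_mem L)

theorem norm_chart_le (u : E →L[ℝ] E) : ‖chart L u‖ ≤ ‖u‖ :=
  calc ‖chart L u‖ ≤ ‖Lᗮ.starProjection * u * Lᗮ.starProjection‖ :=
          norm_skewAdjointPart_le (Lᗮ.starProjection * u * Lᗮ.starProjection)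
    _ ≤ ‖u‖ := norm_mul_mul_le Lᗮ.starProjection_norm_le Lᗮ.starProjection_norm_le u

theorem norm_le_norm_chart_add (u : E →L[ℝ] E) :
    ‖u‖ ≤ ‖chart L u‖ + 2 * ‖u * L.starProjection‖ + 3 / 2 * ‖u + star u‖ := by
  set Q := L.starProjection
  set P := Lᗮ.starProjection
  have hP : P = 1 - Q := L.starProjection_orthogonal'
  have hQnorm : ‖Q‖ ≤ 1 := L.starProjection_norm_le
  have hPnorm : ‖P‖ ≤ 1 := Lᗮ.starProjection_norm_le
  have hQstar : star Q = Q := isSelfAdjoint_starProjection L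
  have hPstar : star P = P := isSelfAdjoint_starProjection Lᗮ
  have hdecomp : u = P * u * P + u * Q + (Q * (u + star u) * P - star (u * Q) * P) := by
    rw [star_mul, hQstar, hP]
    noncomm_ring
  have hdiag : ‖P * u * P‖ ≤ ‖chart L u‖ + ‖u + star u‖ / 2 :=
    calc ‖P * u * P‖ ≤ ‖chart L u‖ + ‖P * u * P + star (P * u * P)‖ / 2 :=
          norm_le_norm_skewAdjointPart_add _
      _ = ‖chart L u‖ + ‖P * (u + star u) * P‖ / 2 := by
          simp only [star_mul, hPstar, mul_add, add_mul, mul_assoc]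
      _ ≤ ‖chart L u‖ + ‖u + star u‖ / 2 := by
          gcongr
          exact norm_mul_mul_le hPnorm hPnorm _
  have hsymm : ‖Q * (u + star u) * P‖ ≤ ‖u + star u‖ := norm_mul_mul_le hQnorm hPnorm _
  have hcross : ‖star (u * Q) * P‖ ≤ ‖u * Q‖ :=
    calc ‖star (u * Q) * P‖ ≤ ‖star (u * Q)‖ * ‖P‖ := norm_mul_le _ _
      _ ≤ ‖star (u * Q)‖ := mul_le_of_le_one_right (norm_nonneg _) hPnorm
      _ = ‖u * Q‖ := norm_star (u * Q)
  calc ‖u‖ ≤ ‖P * u * P‖ + ‖u * Q‖ + (‖Q * (u + star u) * P‖ + ‖star (u * Q) * P‖) := by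
        conv_lhs => rw [hdecomp]
        exact norm_add_le_of_le (norm_add_le _ _) (norm_sub_le _ _)
    _ ≤ ‖chart L u‖ + 2 * ‖u * Q‖ + 3 / 2 * ‖u + star u‖ := by linarith

theorem norm_sub_le_norm_chart_sub_add {a b : E →L[ℝ] E} (hab : star a * a = star b * b)
    (ha : ‖a - 1‖ ≤ 1 / 6) (hb : ‖b - 1‖ ≤ 1 / 6) :
    ‖a - b‖ ≤ 2 * ‖chart L (a - b)‖ + 4 * ‖(a - b) * L.starProjection‖ := by
  have hskew : ‖(a - b) + star (a - b)‖ ≤ 1 / 3 * ‖a - b‖ :=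
    (norm_sub_add_star_sub_le hab).trans (by gcongr; linarith)
  linarith [norm_le_norm_chart_add L (a - b)]

end skewAdjointVanishingOn

end SkewAdjoint

section OrthogonalGroup

open Module (finrank)
open scoped NNReal
open skewAdjointVanishingOn

/-- A measure is `α`-Frostman if every closed ball of radius `r` has measure at most `r ^ α`. -/
def IsFrostman {X : Type*} [PseudoMetricSpace X] [MeasurableSpace X] (α : ℝ) (μ : Measure X) :
    Prop :=
  ∀ (x : X) (r : ℝ), 0 < r → μ (closedBall x r) ≤ ENNReal.ofReal (r ^ α)

variable {E : Type*} [NormedAddCommGroup E] [InnerProductSpace ℝ E]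

/-- The operator-norm distance on the orthogonal group of `E`, pulled back from `E →L[ℝ] E`. -/
noncomputable abbrev opNormPseudoMetricSpace : PseudoMetricSpace (E ≃ₗᵢ[ℝ] E) :=
  .induced (fun g ↦ (g : E →L[ℝ] E)) inferInstance

attribute [local instance] opNormPseudoMetricSpace

theorem dist_eq_norm_coe_sub_coe (g h : E ≃ₗᵢ[ℝ] E) : dist g h = ‖(g : E →L[ℝ] E) - h‖ :=
  dist_eq_norm_sub (g : E →L[ℝ] E) h

theorem isFrostman_iff_norm_coe_sub_coe [MeasurableSpace (E ≃ₗᵢ[ℝ] E)] {α : ℝ}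
    {θ : Measure (E ≃ₗᵢ[ℝ] E)} : IsFrostman α θ ↔ ∀ (g : E ≃ₗᵢ[ℝ] E) (r : ℝ), 0 < r →
      θ {h | ‖(h : E →L[ℝ] E) - g‖ ≤ r} ≤ ENNReal.ofReal (r ^ α) := by
  simp only [IsFrostman, closedBall, dist_eq_norm_coe_sub_coe]

theorem norm_coe_linearIsometryEquiv_le (g : E ≃ₗᵢ[ℝ] E) : ‖(g : E →L[ℝ] E)‖ ≤ 1 :=
  g.toLinearIsometry.norm_toContinuousLinearMap_le

theorem dist_linearIsometryEquiv_le_two (g h : E ≃ₗᵢ[ℝ] E) : dist g h ≤ 2 := by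
  rw [dist_eq_norm_coe_sub_coe]
  linarith [norm_sub_le (g : E →L[ℝ] E) h, norm_coe_linearIsometryEquiv_le g,
    norm_coe_linearIsometryEquiv_le h]

theorem IsFrostman.measure_univ_le [MeasurableSpace (E ≃ₗᵢ[ℝ] E)] {α : ℝ}
    {θ : Measure (E ≃ₗᵢ[ℝ] E)} (hθ : IsFrostman α θ) : θ univ ≤ ENNReal.ofReal (2 ^ α) :=
  (measure_mono fun g _ ↦ dist_linearIsometryEquiv_le_two g 1).trans (hθ 1 2 two_pos)

theorem packingNumber_linearIsometryEquiv_le [FiniteDimensional ℝ E] (A : Set (E ≃ₗᵢ[ℝ] E))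
    {ε : ℝ≥0} (hε : 0 < ε) :
    (packingNumber ε A : ℝ≥0∞) ≤ ENNReal.ofReal ((1 + 2 / ε) ^ finrank ℝ (E →L[ℝ] E)) := by
  have hmaps : MapsTo (fun g : E ≃ₗᵢ[ℝ] E ↦ (g : E →L[ℝ] E)) A (closedBall 0 (1 : ℝ≥0)) :=
    fun g _ ↦ mem_closedBall_zero_iff.2 (norm_coe_linearIsometryEquiv_le g)
  have hpack := packingNumber_le_packingNumber_of_mapsTo (K := 1) (δ := 0) hmaps
    (fun g _ h _ ↦ by rw [NNReal.coe_one, NNReal.coe_zero, one_mul, add_zero]; rfl) ε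
  simpa using (ENat.toENNReal_le.2 hpack).trans
    (packingNumber_closedBall_le (0 : E →L[ℝ] E) 1 hε)

theorem norm_coe_linearIsometryEquiv_mul (k : E ≃ₗᵢ[ℝ] E) (u : E →L[ℝ] E) :
    ‖(k : E →L[ℝ] E) * u‖ = ‖u‖ :=
  k.toLinearIsometry.norm_toContinuousLinearMap_comp

theorem coe_linearIsometryEquiv_mul_sub (k g h : E ≃ₗᵢ[ℝ] E) :
    ((k * g : E ≃ₗᵢ[ℝ] E) : E →L[ℝ] E) - (k * h : E ≃ₗᵢ[ℝ] E) = k * ((g : E →L[ℝ] E) - h) := by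
  rw [mul_sub]
  rfl

theorem norm_coe_inv_mul_sub_one (k g : E ≃ₗᵢ[ℝ] E) :
    ‖((k⁻¹ * g : E ≃ₗᵢ[ℝ] E) : E →L[ℝ] E) - 1‖ = dist g k :=
  calc ‖((k⁻¹ * g : E ≃ₗᵢ[ℝ] E) : E →L[ℝ] E) - 1‖
      = ‖((k⁻¹ * g : E ≃ₗᵢ[ℝ] E) : E →L[ℝ] E) - (k⁻¹ * k : E ≃ₗᵢ[ℝ] E)‖ := by
        rw [inv_mul_cancel]
        rfl
    _ = dist g k := by
        rw [coe_linearIsometryEquiv_mul_sub, norm_coe_linearIsometryEquiv_mul,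
          dist_eq_norm_coe_sub_coe]

theorem star_coe_mul_coe_linearIsometryEquiv [CompleteSpace E] (g : E ≃ₗᵢ[ℝ] E) :
    star (g : E →L[ℝ] E) * (g : E →L[ℝ] E) = 1 :=
  Unitary.coe_star_mul_self (Unitary.linearIsometryEquiv.symm g)

section FibreChart

variable [CompleteSpace E] (L : Submodule ℝ E) [L.HasOrthogonalProjection] (k g : E ≃ₗᵢ[ℝ] E)

/-- The chart at `k` on the fibres of the restriction map `g ↦ g|_L`: the projection of
`k⁻¹ * g - 1`, which is nearly skew-adjoint and nearly kills `L` when `g` is close to `k` and in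
the same fibre, to the operators with these two properties. -/
noncomputable def fibreChart : skewAdjointVanishingOn L :=
  chart L (((k⁻¹ * g : E ≃ₗᵢ[ℝ] E) : E →L[ℝ] E) - 1)

theorem norm_fibreChart_le : ‖fibreChart L k g‖ ≤ dist g k :=
  calc ‖fibreChart L k g‖ ≤ ‖((k⁻¹ * g : E ≃ₗᵢ[ℝ] E) : E →L[ℝ] E) - 1‖ := norm_chart_le L _
    _ = dist g k := norm_coe_inv_mul_sub_one k g

variable {k g} in
theorem dist_le_dist_fibreChart_add {h : E ≃ₗᵢ[ℝ] E} (hg : dist g k ≤ 1 / 6)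
    (hh : dist h k ≤ 1 / 6) :
    dist g h ≤ 2 * dist (fibreChart L k g) (fibreChart L k h) +
      4 * ‖((g : E →L[ℝ] E) - h) * L.starProjection‖ := by
  set a := ((k⁻¹ * g : E ≃ₗᵢ[ℝ] E) : E →L[ℝ] E) with ha
  set b := ((k⁻¹ * h : E ≃ₗᵢ[ℝ] E) : E →L[ℝ] E) with hb
  have hab : star a * a = star b * b := by
    simp only [ha, hb, star_coe_mul_coe_linearIsometryEquiv]
  have hsub : a - b = (k⁻¹ : E ≃ₗᵢ[ℝ] E) * ((g : E →L[ℝ] E) - h) :=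
    coe_linearIsometryEquiv_mul_sub k⁻¹ g h
  have hchart : fibreChart L k g - fibreChart L k h = chart L (a - b) := by
    rw [fibreChart, fibreChart, ← map_sub, sub_sub_sub_cancel_right]
  have hdist : dist g h = ‖a - b‖ := by
    rw [hsub, norm_coe_linearIsometryEquiv_mul, dist_eq_norm_coe_sub_coe]
  have hproj : ‖((g : E →L[ℝ] E) - h) * L.starProjection‖ = ‖(a - b) * L.starProjection‖ := by
    rw [hsub, mul_assoc, norm_coe_linearIsometryEquiv_mul]
  rw [← norm_coe_inv_mul_sub_one] at hg hh
  rw [dist_eq_norm (fibreChart L k g), hchart, hdist, hproj]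
  exact norm_sub_le_norm_chart_sub_add L hab hg hh

end FibreChart

theorem setOf_norm_sub_apply_lt_eq {z : E} (hz : z ≠ 0) (x : E) (r : ℝ) :
    {g : E ≃ₗᵢ[ℝ] E | ‖x - g z‖ < r} =
      {g | ‖(‖z‖⁻¹ • x) - g (‖z‖⁻¹ • z)‖ < r / ‖z‖} := by
  ext g
  rw [mem_ofPred_eq, mem_ofPred_eq, map_smul, ← smul_sub, norm_smul, norm_inv, norm_norm,
    inv_mul_eq_div, div_lt_div_iff_of_pos_right (norm_pos_iff.2 hz)]

variable [FiniteDimensional ℝ E]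

theorem packingNumber_fibre_inter_closedBall_le {w : E} (hw : ‖w‖ = 1)
    (x : E) (k : E ≃ₗᵢ[ℝ] E) {ρ : ℝ≥0} (hρ : 0 < ρ) :
    (packingNumber (10 * ρ) ({g : E ≃ₗᵢ[ℝ] E | ‖x - g w‖ < ρ} ∩ closedBall k (1 / 6)) : ℝ≥0∞) ≤
      ENNReal.ofReal ((1 + 1 / (3 * ρ)) ^ finrank ℝ (skewAdjointVanishingOn (ℝ ∙ w))) := by
  set A := {g : E ≃ₗᵢ[ℝ] E | ‖x - g w‖ < ρ} ∩ closedBall k (1 / 6)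
  have hmaps : MapsTo (fibreChart (ℝ ∙ w) k) A (closedBall 0 (1 / 6 : ℝ≥0)) := fun g hg ↦
    mem_closedBall_zero_iff.2 <| (norm_fibreChart_le _ k g).trans <| by simpa using hg.2
  have hdist : ∀ g ∈ A, ∀ h ∈ A, dist g h ≤
      (2 : ℝ≥0) * dist (fibreChart (ℝ ∙ w) k g) (fibreChart (ℝ ∙ w) k h) + (8 * ρ : ℝ≥0) := by
    intro g hg h hh
    have hgh : dist (g w) (h w) ≤ ρ + ρ := (dist_triangle_left _ _ x).trans <| by
      simpa only [dist_eq_norm] using add_le_add hg.1.le hh.1.le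
    have hspan : ‖((g : E →L[ℝ] E) - h) * (ℝ ∙ w).starProjection‖ ≤ dist (g w) (h w) :=
      (norm_mul_starProjection_span_singleton_le hw _).trans_eq (dist_eq_norm _ _).symm
    push_cast
    linarith [dist_le_dist_fibreChart_add (ℝ ∙ w) hg.2 hh.2]
  have hscale : 10 * ρ = 2 * ρ + 8 * ρ := by ring
  have hbase : 1 + 1 / (3 * ρ : ℝ) = 1 + 2 * (1 / 6 : ℝ≥0) / ρ := by
    push_cast
    field_simp
    ring
  rw [hscale, hbase]
  exact (ENat.toENNReal_le.2 (packingNumber_le_packingNumber_of_mapsTo hmaps hdist ρ)).trans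
    (packingNumber_closedBall_le (V := skewAdjointVanishingOn (ℝ ∙ w)) 0 (1 / 6) hρ)

theorem finrank_skewAdjointVanishingOn_span_singleton_le {w : E} (hw : w ≠ 0) :
    finrank ℝ (skewAdjointVanishingOn (ℝ ∙ w)) ≤ (finrank ℝ E - 1).choose 2 := by
  have hcodim : finrank ℝ (ℝ ∙ w)ᗮ = finrank ℝ E - 1 := by
    rw [← (ℝ ∙ w).finrank_add_finrank_orthogonal, finrank_span_singleton hw,
      Nat.add_sub_cancel_left]
  exact hcodim ▸ finrank_le (ℝ ∙ w)

namespace IsFrostman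

variable [MeasurableSpace (E ≃ₗᵢ[ℝ] E)] {α : ℝ} {θ : Measure (E ≃ₗᵢ[ℝ] E)}

theorem measure_fibre_inter_closedBall_le (hθ : IsFrostman α θ) {w : E} (hw : ‖w‖ = 1) (x : E)
    (k : E ≃ₗᵢ[ℝ] E) {ρ : ℝ≥0} (hρ : 0 < ρ) (hρ1 : (ρ : ℝ) ≤ 1) :
    θ ({g | ‖x - g w‖ < ρ} ∩ closedBall k (1 / 6)) ≤
      ENNReal.ofReal ((2 / ρ) ^ (finrank ℝ E - 1).choose 2 * (10 * ρ) ^ α) := by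
  set A := {g : E ≃ₗᵢ[ℝ] E | ‖x - g w‖ < ρ} ∩ closedBall k (1 / 6)
  have hρ' : (0 : ℝ) < ρ := hρ
  have hcount : (1 + 1 / (3 * ρ : ℝ)) ^ finrank ℝ (skewAdjointVanishingOn (ℝ ∙ w)) ≤
      (2 / ρ) ^ (finrank ℝ E - 1).choose 2 := by
    have hbase : 1 + 1 / (3 * ρ : ℝ) ≤ 2 / ρ := by
      rw [← sub_nonneg]
      field_simp
      linarith
    have hone : (1 : ℝ) ≤ 2 / ρ := (one_le_div hρ').2 (by linarith)
    exact (pow_le_pow_left₀ (by positivity) hbase _).trans <| pow_le_pow_right₀ hone <|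
      finrank_skewAdjointVanishingOn_span_singleton_le (norm_ne_zero_iff.1 (hw ▸ one_ne_zero))
  rw [ENNReal.ofReal_mul (by positivity)]
  refine measure_le_of_packingNumber_le ((packingNumber_fibre_inter_closedBall_le hw x k hρ).trans
    (ENNReal.ofReal_le_ofReal hcount)) fun g _ ↦ ?_
  exact (measure_mono inter_subset_right).trans (hθ g _ (by positivity))

theorem measure_fibre_le (hθ : IsFrostman α θ) {w : E} (hw : ‖w‖ = 1) (x : E) {ρ : ℝ≥0}
    (hρ : 0 < ρ) (hρ1 : (ρ : ℝ) ≤ 1) :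
    θ {g | ‖x - g w‖ < ρ} ≤ ENNReal.ofReal (13 ^ finrank ℝ (E →L[ℝ] E) *
      ((2 / ρ) ^ (finrank ℝ E - 1).choose 2 * (10 * ρ) ^ α)) := by
  have hpack := packingNumber_linearIsometryEquiv_le {g : E ≃ₗᵢ[ℝ] E | ‖x - g w‖ < ρ}
    (ε := 1 / 6) (by norm_num)
  have hbase : 1 + 2 / ((1 / 6 : ℝ≥0) : ℝ) = 13 := by norm_num
  rw [ENNReal.ofReal_mul (by positivity)]
  refine measure_le_of_packingNumber_le (hbase ▸ hpack) fun k _ ↦ ?_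
  simpa using hθ.measure_fibre_inter_closedBall_le hw x k hρ hρ1

end IsFrostman

theorem stmt15_general [MeasurableSpace (E ≃ₗᵢ[ℝ] E)] {α : ℝ}
    (hα : ((finrank ℝ E : ℝ) - 1) * ((finrank ℝ E : ℝ) - 2) / 2 ≤ α) :
    ∃ C : ℝ, 0 < C ∧ ∀ θ : Measure (E ≃ₗᵢ[ℝ] E), IsFrostman α θ →
      ∀ x z : E, z ≠ 0 → ∀ r : ℝ, 0 < r → θ {g | ‖x - g z‖ < r} ≤ ENNReal.ofReal
        (C * (r / ‖z‖) ^ (α - ((finrank ℝ E : ℝ) - 1) * ((finrank ℝ E : ℝ) - 2) / 2)) := by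
  set d := (finrank ℝ E - 1).choose 2
  set C₀ : ℝ := 13 ^ finrank ℝ (E →L[ℝ] E) * 2 ^ d * 10 ^ α
  refine ⟨max C₀ (2 ^ α), by positivity, fun θ hθ x z hz r hr ↦ ?_⟩
  have hd : ((finrank ℝ E : ℝ) - 1) * ((finrank ℝ E : ℝ) - 2) / 2 = d := by
    have : Nontrivial E := nontrivial_of_ne z 0 hz
    rw [Nat.cast_choose_two, Nat.cast_pred Module.finrank_pos]
    ring
  rw [hd] at hα ⊢
  obtain ⟨ρ, hρ⟩ : ∃ ρ : ℝ≥0, (ρ : ℝ) = r / ‖z‖ := ⟨⟨r / ‖z‖, by positivity⟩, rfl⟩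
  have hρ0 : (0 : ℝ) < ρ := hρ ▸ by positivity
  rw [setOf_norm_sub_apply_lt_eq hz, ← hρ]
  rcases le_total ρ 1 with hρ1 | hρ1
  · refine (hθ.measure_fibre_le (norm_smul_inv_norm (𝕜 := ℝ) hz) _ hρ0 hρ1).trans
      (ENNReal.ofReal_le_ofReal ?_)
    calc 13 ^ finrank ℝ (E →L[ℝ] E) * ((2 / ρ : ℝ) ^ d * (10 * ρ) ^ α)
        = C₀ * ρ ^ (α - d) := by
          rw [Real.rpow_sub_natCast hρ0.ne', Real.mul_rpow (by norm_num) hρ0.le, div_pow]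
          ring
      _ ≤ max C₀ (2 ^ α) * ρ ^ (α - d) := by gcongr; exact le_max_left _ _
  · refine (measure_mono (subset_univ _)).trans <| hθ.measure_univ_le.trans
      (ENNReal.ofReal_le_ofReal ?_)
    have hone : (1 : ℝ) ≤ ρ ^ (α - d) := Real.one_le_rpow hρ1 (sub_nonneg.2 hα)
    exact (le_max_right _ _).trans (le_mul_of_one_le_right (by positivity) hone)

end OrthogonalGroup

theorem stmt15 (n : ℕ) (α : ℝ)
    (hα : ((n : ℝ) - 1) * ((n : ℝ) - 2) / 2 < α)
    [MeasurableSpace (EuclideanSpace ℝ (Fin n) ≃ₗᵢ[ℝ] EuclideanSpace ℝ (Fin n))] :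
    ∃ C : ℝ, 0 < C ∧
      ∀ θ : Measure (EuclideanSpace ℝ (Fin n) ≃ₗᵢ[ℝ] EuclideanSpace ℝ (Fin n)),
        θ Set.univ ≤ 1 →
        (∀ (g : EuclideanSpace ℝ (Fin n) ≃ₗᵢ[ℝ] EuclideanSpace ℝ (Fin n)) (r : ℝ), 0 < r →
          θ {h | ‖h.toLinearIsometry.toContinuousLinearMap -
                  g.toLinearIsometry.toContinuousLinearMap‖ ≤ r} ≤
            ENNReal.ofReal (r ^ α)) →
        ∀ x z : EuclideanSpace ℝ (Fin n), x ≠ 0 → z ≠ 0 → ∀ r : ℝ, 0 < r →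
          θ {g | ‖x - g z‖ < r} ≤
            ENNReal.ofReal (C * (r / ‖z‖) ^ (α - ((n : ℝ) - 1) * ((n : ℝ) - 2) / 2)) := by
  obtain ⟨C, hC, h⟩ := stmt15_general (E := EuclideanSpace ℝ (Fin n)) (by simpa using hα.le)
  exact ⟨C, hC, fun θ _ hθ x z _ hz r hr ↦ by
    simpa using h θ (isFrostman_iff_norm_coe_sub_coe.2 hθ) x z hz r hr⟩
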